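/- Let σ ∈ Sp(V,a) be semisimple (i.e., V_ℂ is the direct sum of the eigenspaces of σ_ℂ) and suppose σ_ℂ(F) = F for some F ∈ ℍ_V. Then for every eigenvalue λ of σ_ℂ, writing F^λ := F ∩ V_ℂ^λ and p_λ := dim_ℂ F^λ, the eigenspace V_ℂ^λ is the internal direct sum of F^λ and the complex conjugate of F^{λ̄}, and the hermitian form h restricted to V_ℂ^λ is nondegenerate of signature (p_λ, p_{λ̄}). -/

import Mathlib

open TensorProduct Module

noncomputable section

instance : RingHomSurjective (starRingEnd ℂ) :=
  ⟨fun z => ⟨(starRingEnd ℂ) z, by simp⟩⟩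

variable {V : Type*} [AddCommGroup V] [Module ℝ V]

/-- The conjugation of `V_ℂ = ℂ ⊗[ℝ] V` induced by complex conjugation on `ℂ`. -/
def conjC (V : Type*) [AddCommGroup V] [Module ℝ V] :
    (ℂ ⊗[ℝ] V) →ₛₗ[starRingEnd ℂ] (ℂ ⊗[ℝ] V) where
  toFun := TensorProduct.map Complex.conjAe.toLinearMap LinearMap.id
  map_add' x y := map_add _ x y
  map_smul' c x := by
    induction x using TensorProduct.induction_on with
    | zero => simp
    | tmul z v =>
        simp [TensorProduct.smul_tmul', smul_eq_mul, map_mul]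
    | add x y hx hy => simp_all [smul_add]

/-- The hermitian form `h(v,w) = √-1 ⬝ a_ℂ(v, conj w)` associated to a real
symplectic form `a`. -/
def hermSymp (a : LinearMap.BilinForm ℝ V) (v w : ℂ ⊗[ℝ] V) : ℂ :=
  Complex.I * (LinearMap.BilinForm.baseChange ℂ a) v (conjC V w)

/-- Membership in `ℍ_V`: a `g`-dimensional complex subspace of `V_ℂ` that is totally
isotropic for `a_ℂ` and on which `h` is positive definite. -/
def InHV (a : LinearMap.BilinForm ℝ V) (g : ℕ) (F : Submodule ℂ (ℂ ⊗[ℝ] V)) : Prop :=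
  Module.finrank ℂ F = g ∧
  (∀ v ∈ F, ∀ w ∈ F, (LinearMap.BilinForm.baseChange ℂ a) v w = 0) ∧
  (∀ v ∈ F, v ≠ 0 → ∃ r : ℝ, 0 < r ∧ hermSymp a v v = r)

theorem conjC_tmul' (z : ℂ) (v : V) : conjC V (z ⊗ₜ[ℝ] v) = (starRingEnd ℂ z) ⊗ₜ[ℝ] v := rfl

theorem conjC_conjC' (x : ℂ ⊗[ℝ] V) : conjC V (conjC V x) = x := by
  induction x using TensorProduct.induction_on with
  | zero => simp
  | tmul z v => simp [conjC_tmul']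
  | add x y hx hy => simp [hx, hy]

theorem conjC_comm' (s : V →ₗ[ℝ] V) (x : ℂ ⊗[ℝ] V) :
    LinearMap.baseChange ℂ s (conjC V x) = conjC V (LinearMap.baseChange ℂ s x) := by
  induction x using TensorProduct.induction_on with
  | zero => simp
  | tmul z v => simp [conjC_tmul']
  | add x y hx hy => simp [hx, hy]

theorem baseChange_conj' (a : LinearMap.BilinForm ℝ V) (x y : ℂ ⊗[ℝ] V) :
    (LinearMap.BilinForm.baseChange ℂ a) (conjC V x) (conjC V y) =
      starRingEnd ℂ ((LinearMap.BilinForm.baseChange ℂ a) x y) := by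
  induction x using TensorProduct.induction_on with
  | zero => simp
  | add x y hx hy => simp [hx, hy]
  | tmul z v =>
    induction y using TensorProduct.induction_on with
    | zero => simp
    | add x y hx hy => simp [hx, hy]
    | tmul w u => simp [conjC_tmul', LinearMap.BilinForm.baseChange_tmul]

theorem baseChange_neg' (a : LinearMap.BilinForm ℝ V) (halt : LinearMap.IsAlt a)
    (x y : ℂ ⊗[ℝ] V) :
    (LinearMap.BilinForm.baseChange ℂ a) x y = - (LinearMap.BilinForm.baseChange ℂ a) y x := by
  induction x using TensorProduct.induction_on with
  | zero => simp
  | add x y hx hy => simp [hx, hy]; ring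
  | tmul z v =>
    induction y using TensorProduct.induction_on with
    | zero => simp
    | add x y hx hy => simp [hx, hy]; ring
    | tmul w u =>
      simp only [LinearMap.BilinForm.baseChange_tmul]
      rw [← halt.neg v u]
      simp [mul_comm]

theorem finrank_conj' (S : Submodule ℂ (ℂ ⊗[ℝ] V)) :
    Module.finrank ℂ (Submodule.map (conjC V) S) = Module.finrank ℂ S := by
  have hinj : Function.Injective (conjC V) := fun x y h => by
    rw [← conjC_conjC' x, h, conjC_conjC']
  let e : S ≃+ Submodule.map (conjC V) S :=
    AddEquiv.ofBijective
      (AddMonoidHom.mk' (fun x : S => (⟨conjC V x, Submodule.mem_map_of_mem x.2⟩ :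
        Submodule.map (conjC V) S)) (fun x y => by ext; simp))
      ⟨fun x y h => Subtype.ext (hinj (congrArg Subtype.val h)), by
        rintro ⟨_, x, hx, rfl⟩
        exact ⟨⟨x, hx⟩, rfl⟩⟩
  have := rank_eq_of_equiv_equiv (starRingEnd ℂ) e (RingEquiv.bijective (starRingAut (R := ℂ)))
    (fun r m => Subtype.ext ((conjC V).map_smulₛₗ r (m : ℂ ⊗[ℝ] V)))
  simp only [Module.finrank, this]

theorem hermSymp_conj' (a : LinearMap.BilinForm ℝ V) (halt : LinearMap.IsAlt a)
    (x : ℂ ⊗[ℝ] V) : hermSymp a (conjC V x) (conjC V x) = - hermSymp a x x := by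
  simp only [hermSymp, conjC_conjC']
  rw [baseChange_neg' a halt]; ring

/-- let `σ ∈ Sp(V,a)` be semisimple with `σ_ℂ(F) = F` for some `F ∈ ℍ_V`.
Then for every eigenvalue `λ` of `σ_ℂ`, with `F^λ = F ∩ V_ℂ^λ` and `p_λ = dim F^λ`, the
eigenspace `V_ℂ^λ` is the internal direct sum of `F^λ` and the conjugate of `F^{λ̄}`, and
`h` restricted to `V_ℂ^λ` is nondegenerate of signature `(p_λ, p_{λ̄})`. -/
theorem eigenspace_decomposition_and_signature
    [FiniteDimensional ℝ V] (g : ℕ) (hg : 1 ≤ g)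
    (hdim : Module.finrank ℝ V = 2 * g)
    (a : LinearMap.BilinForm ℝ V)
    (halt : LinearMap.IsAlt a) (hnd : LinearMap.BilinForm.Nondegenerate a)
    (σ : V ≃ₗ[ℝ] V) (hσ : ∀ v w : V, a (σ v) (σ w) = a v w)
    (hss : ⨆ μ : ℂ,
      Module.End.eigenspace (LinearMap.baseChange ℂ (σ : V →ₗ[ℝ] V)) μ = ⊤)
    (F : Submodule ℂ (ℂ ⊗[ℝ] V)) (hF : InHV a g F)
    (hstab : Submodule.map (LinearMap.baseChange ℂ (σ : V →ₗ[ℝ] V)) F = F) :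
    ∀ lam : ℂ,
      Module.End.HasEigenvalue (LinearMap.baseChange ℂ (σ : V →ₗ[ℝ] V)) lam →
      (F ⊓ Module.End.eigenspace (LinearMap.baseChange ℂ (σ : V →ₗ[ℝ] V)) lam) ⊓
        Submodule.map (conjC V)
          (F ⊓ Module.End.eigenspace (LinearMap.baseChange ℂ (σ : V →ₗ[ℝ] V))
            (starRingEnd ℂ lam)) = ⊥ ∧
      (F ⊓ Module.End.eigenspace (LinearMap.baseChange ℂ (σ : V →ₗ[ℝ] V)) lam) ⊔
        Submodule.map (conjC V)
          (F ⊓ Module.End.eigenspace (LinearMap.baseChange ℂ (σ : V →ₗ[ℝ] V))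
            (starRingEnd ℂ lam)) =
        Module.End.eigenspace (LinearMap.baseChange ℂ (σ : V →ₗ[ℝ] V)) lam ∧
      (∀ v ∈ Module.End.eigenspace (LinearMap.baseChange ℂ (σ : V →ₗ[ℝ] V)) lam,
        (∀ w ∈ Module.End.eigenspace (LinearMap.baseChange ℂ (σ : V →ₗ[ℝ] V)) lam,
          hermSymp a v w = 0) → v = 0) ∧
      (∃ P N : Submodule ℂ (ℂ ⊗[ℝ] V),
        P ≤ Module.End.eigenspace (LinearMap.baseChange ℂ (σ : V →ₗ[ℝ] V)) lam ∧
        N ≤ Module.End.eigenspace (LinearMap.baseChange ℂ (σ : V →ₗ[ℝ] V)) lam ∧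
        P ⊓ N = ⊥ ∧
        P ⊔ N = Module.End.eigenspace (LinearMap.baseChange ℂ (σ : V →ₗ[ℝ] V)) lam ∧
        Module.finrank ℂ P = Module.finrank ℂ
          ↥(F ⊓ Module.End.eigenspace (LinearMap.baseChange ℂ (σ : V →ₗ[ℝ] V)) lam) ∧
        Module.finrank ℂ N = Module.finrank ℂ
          ↥(F ⊓ Module.End.eigenspace (LinearMap.baseChange ℂ (σ : V →ₗ[ℝ] V))
            (starRingEnd ℂ lam)) ∧
        (∀ v ∈ P, ∀ w ∈ N, hermSymp a v w = 0) ∧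
        (∀ v ∈ P, v ≠ 0 → ∃ r : ℝ, 0 < r ∧ hermSymp a v v = r) ∧
        (∀ w ∈ N, w ≠ 0 → ∃ r : ℝ, r < 0 ∧ hermSymp a w w = r)) := by
  obtain ⟨hFd, hFi, hFp⟩ := hF
  set T := LinearMap.baseChange ℂ (σ : V →ₗ[ℝ] V) with hT
  have hN : ∀ w ∈ Submodule.map (conjC V) F, w ≠ 0 →
      ∃ r : ℝ, r < 0 ∧ hermSymp a w w = r := by
    rintro _ ⟨f, hf, rfl⟩ h0
    obtain ⟨r, hr, h⟩ := hFp f hf (by rintro rfl; simp at h0)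
    exact ⟨-r, by linarith, by rw [hermSymp_conj' a halt, h]; simp⟩
  have hdisj : F ⊓ Submodule.map (conjC V) F = ⊥ := by
    rw [eq_bot_iff]
    rintro v ⟨h1, h2⟩
    by_contra h0
    obtain ⟨r, hr, h⟩ := hFp v h1 h0
    obtain ⟨s, hs, h'⟩ := hN v h2 h0
    have : r = s := by exact_mod_cast h.symm.trans h'
    linarith
  have htop : F ⊔ Submodule.map (conjC V) F = ⊤ := by
    apply Submodule.eq_top_of_finrank_eq
    have := Submodule.finrank_sup_add_finrank_inf_eq F (Submodule.map (conjC V) F)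
    rw [hdisj, finrank_bot, finrank_conj', hFd] at this
    rw [Module.finrank_baseChange, hdim]
    omega
  have hTF : ∀ f ∈ F, T f ∈ F := fun f hf => by
    rw [← hstab]; exact Submodule.mem_map_of_mem hf
  intro lam _
  set E := Module.End.eigenspace T lam with hE
  set P := F ⊓ E with hP
  set N := Submodule.map (conjC V) (F ⊓ Module.End.eigenspace T (starRingEnd ℂ lam)) with hNdef
  have hNF : N ≤ Submodule.map (conjC V) F := Submodule.map_mono inf_le_left
  have hNE : N ≤ E := by
    rintro _ ⟨f, ⟨_, hf⟩, rfl⟩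
    have hf' := Module.End.mem_eigenspace_iff.1 hf
    refine Module.End.mem_eigenspace_iff.2 ?_
    rw [hT, conjC_comm', ← hT, hf']
    simp
  have hPN : P ⊓ N = ⊥ := by
    rw [eq_bot_iff, ← hdisj]
    exact inf_le_inf inf_le_left hNF
  have hsup : P ⊔ N = E := by
    apply le_antisymm (sup_le inf_le_right hNE)
    intro v hv
    have hv' := Module.End.mem_eigenspace_iff.1 hv
    obtain ⟨f, hf, _, ⟨f', hf', rfl⟩, rfl⟩ :=
      Submodule.mem_sup.1 (htop ▸ Submodule.mem_top : v ∈ F ⊔ Submodule.map (conjC V) F)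
    rw [map_add, hT, conjC_comm', ← hT, smul_add] at hv'
    have hd : T f - lam • f = conjC V ((starRingEnd ℂ lam) • f' - T f') := by
      rw [map_sub, LinearMap.map_smulₛₗ, Complex.conj_conj, sub_eq_sub_iff_add_eq_add, hv']
      abel
    have h1 : T f - lam • f ∈ F := F.sub_mem (hTF f hf) (F.smul_mem _ hf)
    have h2 : T f - lam • f ∈ F ⊓ Submodule.map (conjC V) F :=
      ⟨h1, hd ▸ Submodule.mem_map_of_mem (F.sub_mem (F.smul_mem _ hf') (hTF f' hf'))⟩
    rw [hdisj, Submodule.mem_bot] at h2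
    rw [h2] at hd
    have h3 : (starRingEnd ℂ lam) • f' - T f' = 0 := by
      rw [← conjC_conjC' ((starRingEnd ℂ lam) • f' - T f'), ← hd, map_zero]
    exact Submodule.mem_sup.2 ⟨f, ⟨hf, Module.End.mem_eigenspace_iff.2 (sub_eq_zero.1 h2)⟩, _,
      Submodule.mem_map_of_mem
        ⟨hf', Module.End.mem_eigenspace_iff.2 (sub_eq_zero.1 h3).symm⟩, rfl⟩
  have hort : ∀ v ∈ P, ∀ w ∈ N, hermSymp a v w = 0 := by
    rintro v ⟨hv, _⟩ _ ⟨f, ⟨hf, _⟩, rfl⟩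
    simp [hermSymp, conjC_conjC', hFi v hv f hf]
  have hort' : ∀ v ∈ P, ∀ w ∈ N, hermSymp a w v = 0 := by
    rintro v ⟨hv, _⟩ _ ⟨f, ⟨hf, _⟩, rfl⟩
    simp [hermSymp, baseChange_conj', hFi f hf v hv]
  have hadd : ∀ u v w, hermSymp a (u + v) w = hermSymp a u w + hermSymp a v w := by
    intro u v w
    simp [hermSymp, mul_add]
  refine ⟨hPN, hsup, ?_, P, N, inf_le_right, hNE, hPN, hsup, rfl, finrank_conj' _, hort,
    fun v hv => hFp v hv.1, fun w hw => hN w (hNF hw)⟩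
  intro v hv h0
  rw [← hsup] at hv
  obtain ⟨p, hp, n, hn, rfl⟩ := Submodule.mem_sup.1 hv
  have hp0 : p = 0 := by
    by_contra hne
    obtain ⟨r, hr, h⟩ := hFp p hp.1 hne
    have := h0 p hp.2
    rw [hadd, hort' p hp n hn, h, add_zero] at this
    have : r = 0 := by exact_mod_cast this
    linarith
  have hn0 : n = 0 := by
    by_contra hne
    obtain ⟨r, hr, h⟩ := hN n (hNF hn) hne
    have := h0 n (hNE hn)
    rw [hadd, hort p hp n hn, h, zero_add] at this
    have : r = 0 := by exact_mod_cast this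
    linarith
  rw [hp0, hn0, add_zero]

end
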